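/- There is a uniform constant C such that for all scalar u, v ∈ C₀^∞(ℝ×ℝ³) and all t ≥ 0: ∫_{ℝ³} (⟨t−r⟩/⟨t+r⟩) |∂²u(t,x)| |v'(t,x)| ⟨x⟩^{−1} dx ≤ C⟨t⟩^{−1}( Σ_{|α|≤1} ‖Γ^α u'(t,·)‖₂ + ‖⟨t+r⟩□u(t,·)‖₂ ) · ‖⟨x⟩^{−1} v'(t,·)‖₂, where |∂²u| denotes the sum of absolute values of all second space-time derivatives of u. -/

import Mathlib

open MeasureTheory Real Finset

noncomputable section

/-- Points of space-time `ℝ×ℝ³`, written `X = (x₀,x₁,x₂,x₃)` with `x₀ = t`. -/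
abbrev Pt : Type := Fin 4 → ℝ
/-- Points of space `ℝ³`. -/
abbrev Sp : Type := Fin 3 → ℝ

/-- Space-time partial derivative `∂_a`. -/
def pd (a : Fin 4) (u : Pt → ℝ) : Pt → ℝ := fun X => fderiv ℝ u X (Pi.single a 1)

/-- Rotation field `Ω_{ij} = x_i ∂_j - x_j ∂_i` (space-time indices). -/
def rot (i j : Fin 4) (u : Pt → ℝ) : Pt → ℝ := fun X => X i * pd j u X - X j * pd i u X

/-- Scaling field `S = t ∂_t + x·∇_x = x^a ∂_a`. -/
def scal (u : Pt → ℝ) : Pt → ℝ := fun X => ∑ a, X a * pd a u X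

/-- The eight vector fields `Γ = (∂, Ω, S)`. -/
def Gam : Fin 8 → (Pt → ℝ) → Pt → ℝ :=
  ![pd 0, pd 1, pd 2, pd 3, rot 1 2, rot 1 3, rot 2 3, scal]

/-- `Γ^α` for a multi-index `α` (a word in the eight fields) of length `m`. -/
def GamComp : ∀ {m : ℕ}, (Fin m → Fin 8) → (Pt → ℝ) → Pt → ℝ
  | 0, _, u => u
  | _ + 1, α, u => Gam (α 0) (GamComp (fun i => α i.succ) u)

/-- Euclidean length `r = |x|` of a spatial point. -/
def rad (x : Sp) : ℝ := Real.sqrt (∑ i, (x i) ^ 2)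

/-- Japanese bracket `⟨z⟩ = (1+z²)^{1/2}`. -/
def jb (z : ℝ) : ℝ := Real.sqrt (1 + z ^ 2)

/-- Euclidean norm `|∂u|` of the space-time gradient. -/
def gradNorm (u : Pt → ℝ) (X : Pt) : ℝ := Real.sqrt (∑ a, (pd a u X) ^ 2)

/-- The unit-speed d'Alembertian `□ = ∂_t² - Δ_x`. -/
def box1 (u : Pt → ℝ) : Pt → ℝ := fun X =>
  pd 0 (pd 0 u) X - ∑ j : Fin 3, pd j.succ (pd j.succ u) X

/-- The d'Alembertian `∂_t² - c²Δ_x` with speed `c`. -/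
def boxc (c : ℝ) (u : Pt → ℝ) : Pt → ℝ := fun X =>
  pd 0 (pd 0 u) X - c ^ 2 * ∑ j : Fin 3, pd j.succ (pd j.succ u) X

/-- The recurring right-hand factor
`Σ_{|α|≤1}‖Γ^α u'(t,·)‖₂ + ‖⟨t+r⟩(∂_t²-c²Δ)u(t,·)‖₂`. -/
def Qfac (cs : ℝ) (u : Pt → ℝ) (t : ℝ) : ℝ :=
  (∑ m ∈ Finset.range 2, ∑ α : Fin m → Fin 8,
      (∫ x : Sp, ∑ a, (GamComp α (pd a u) (Fin.cons t x)) ^ 2) ^ ((1:ℝ)/2))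
    + (∫ x : Sp, jb (t + rad x) ^ 2 * (boxc cs u (Fin.cons t x)) ^ 2) ^ ((1:ℝ)/2)

/-- `|∂²u|`: the sum of the absolute values of all second space-time derivatives. -/
def d2abs (u : Pt → ℝ) (X : Pt) : ℝ := ∑ a, ∑ b, |pd a (pd b u) X|

/-!
By Cauchy-Schwarz and `⟨t + r⟩ ≥ ⟨t⟩` it is enough to bound the `L²` norm of `⟨t - r⟩ ∂²u` at time
`t` by `Qfac 1 u t`. The derivatives `S ∂_b u` and `Ω_{ij} ∂_b u` are linear combinations of second
derivatives of `u`; eliminating among them and `□u` expresses `(t² - r²) ∂_t² u`,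
`(t² - r²) ∂_t ∂_j u` and `(t² - r²) Δu` by `S ∂u`, `Ω ∂u` and `□u` with coefficients of size
`t + r`, resp. `(t + r)²` for `□u`. Dividing by `(1 + t² + r²)^{1/2}` gives the bound pointwise for
these derivatives, with `⟨t - r⟩²` replaced by the smooth weight `ρ = (t² - r²)² / (1 + t² + r²)`,
for which `⟨t - r⟩² ≤ 2 + 2 ρ`.

The spatial Hessian `D²u` escapes such a pointwise bound near `r = 0`, where the rotations
degenerate. But `ρ (|D²u|² - (Δu)²) + ∇ρ · D²u ∇u - (∇ρ · ∇u) Δu` is a spatial divergence, so its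
integral vanishes, and as `|∇ρ|² ≤ 36 ρ`, its last two terms are absorbed at the cost of `|∇u|²`.
-/

section GeneralInequalities

lemma abs_le_add_of_sq_le_four_mul {a b y : ℝ} (ha : 0 ≤ a) (hb : 0 ≤ b)
    (h : y ^ 2 ≤ 4 * (a * b)) : |y| ≤ a + b :=
  abs_le_of_sq_le_sq (by linarith [four_mul_le_sq_add a b]) (add_nonneg ha hb)

lemma sub_sub_add_sq_le_four_mul (a b c d : ℝ) :
    (a - b - c + d) ^ 2 ≤ 4 * (a ^ 2 + b ^ 2 + c ^ 2 + d ^ 2) := by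
  have h := sq_sum_le_card_mul_sum_sq (s := univ) (f := ![a, -b, -c, d])
  simpa [Fin.sum_univ_four, ← sub_eq_add_neg] using h

lemma sum_add_le_sq_sum_sqrt_add_sqrt {ι : Type*} {s : Finset ι} {f : ι → ℝ} {b : ℝ}
    (hf : ∀ i ∈ s, 0 ≤ f i) (hb : 0 ≤ b) :
    ∑ i ∈ s, f i + b ≤ (∑ i ∈ s, √(f i) + √b) ^ 2 := by
  have hsum : ∑ i ∈ s, f i ≤ (∑ i ∈ s, √(f i)) ^ 2 := by
    rw [← sum_congr rfl fun i hi => sq_sqrt (hf i hi)]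
    exact sum_sq_le_sq_sum_of_nonneg fun _ _ => sqrt_nonneg _
  have hprod : 0 ≤ (∑ i ∈ s, √(f i)) * √b := by positivity
  rw [add_sq, sq_sqrt hb]
  linarith

lemma integral_mul_le_sqrt_mul_sqrt {α : Type*} [MeasurableSpace α] {μ : Measure α} {f g : α → ℝ}
    (hf : MemLp f 2 μ) (hg : MemLp g 2 μ) (hf0 : 0 ≤ f) (hg0 : 0 ≤ g) :
    ∫ x, f x * g x ∂μ ≤ √(∫ x, f x ^ 2 ∂μ) * √(∫ x, g x ^ 2 ∂μ) := by
  have h := integral_mul_le_Lp_mul_Lq_of_nonneg HolderConjugate.two_two (ae_of_all μ hf0)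
    (ae_of_all μ hg0) (by simpa using hf) (by simpa using hg)
  simpa [sqrt_eq_rpow] using h

lemma integral_fderiv_apply_eq_zero {E : Type*} [NormedAddCommGroup E] [NormedSpace ℝ E]
    [FiniteDimensional ℝ E] [MeasurableSpace E] [BorelSpace E] (μ : Measure E)
    [μ.IsAddHaarMeasure] {f : E → ℝ} (hf : ContDiff ℝ 1 f) (hc : HasCompactSupport f) (v : E) :
    ∫ x, fderiv ℝ f x v ∂μ = 0 := by
  have hparts := integral_mul_fderiv_eq_neg_fderiv_mul_of_integrable (μ := μ)
    (f := fun _ => (1 : ℝ)) (g := f) (v := v) (by simp)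
    (by simpa using ((hf.continuous_fderiv (by norm_num)).clm_apply
      continuous_const).integrable_of_hasCompactSupport (hc.fderiv_apply ℝ v))
    (by simpa using hf.continuous.integrable_of_hasCompactSupport hc)
    (by simp) fun x _ => hf.differentiable (by norm_num) x
  simpa using hparts

end GeneralInequalities

section Absorption

variable {ι : Type*} [Fintype ι]

/-- The integrand of the weighted Bochner identity for a function with gradient `f` and Hessian `H`,
where the weight has value `w` and gradient `g`. -/
def bochnerForm (w : ℝ) (g f : ι → ℝ) (H : ι → ι → ℝ) : ℝ :=
  ∑ i, ∑ j, (w * (H i j ^ 2 - H i i * H j j) + g i * f j * H i j - g j * f j * H i i)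

lemma bochnerForm_eq (w : ℝ) (g f : ι → ℝ) (H : ι → ι → ℝ) :
    bochnerForm w g f H = w * ∑ i, ∑ j, H i j ^ 2 - w * (∑ i, H i i) ^ 2
      + ∑ i, ∑ j, g i * f j * H i j - (∑ j, g j * f j) * ∑ i, H i i := by
  have hdiag : (∑ j, g j * f j) * ∑ i, H i i = ∑ i, ∑ j, g j * f j * H i i := by
    rw [sum_mul_sum, sum_comm]
  rw [hdiag, sq, sum_mul_sum]
  simp only [bochnerForm, sum_add_distrib, sum_sub_distrib, mul_sub, mul_sum]

lemma mul_sum_sum_sq_le_bochnerForm {w c : ℝ} (g f : ι → ℝ) (H : ι → ι → ℝ) (hw : 0 ≤ w)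
    (hc : 0 ≤ c) (hg : ∑ i, g i ^ 2 ≤ c * w) :
    w * ∑ i, ∑ j, H i j ^ 2 ≤
      3 * (w * (∑ i, H i i) ^ 2) + 2 * c * ∑ j, f j ^ 2 + 2 * bochnerForm w g f H := by
  have hfull : |∑ i, ∑ j, g i * f j * H i j|
      ≤ w * (∑ i, ∑ j, H i j ^ 2) / 2 + c * (∑ j, f j ^ 2) / 2 := by
    refine abs_le_add_of_sq_le_four_mul (by positivity) (by positivity) ?_
    calc (∑ i, ∑ j, g i * f j * H i j) ^ 2
        = (∑ p : ι × ι, g p.1 * f p.2 * H p.1 p.2) ^ 2 := by rw [Fintype.sum_prod_type]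
      _ ≤ (∑ p : ι × ι, (g p.1 * f p.2) ^ 2) * ∑ p : ι × ι, H p.1 p.2 ^ 2 :=
          sum_mul_sq_le_sq_mul_sq _ _ _
      _ = (∑ i, g i ^ 2) * (∑ j, f j ^ 2) * ∑ i, ∑ j, H i j ^ 2 := by
          simp only [Fintype.sum_prod_type, mul_pow, sum_mul_sum]
      _ ≤ c * w * (∑ j, f j ^ 2) * ∑ i, ∑ j, H i j ^ 2 := by gcongr
      _ = _ := by ring
  have htrace : |(∑ j, g j * f j) * ∑ i, H i i|
      ≤ w * (∑ i, H i i) ^ 2 / 2 + c * (∑ j, f j ^ 2) / 2 := by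
    refine abs_le_add_of_sq_le_four_mul (by positivity) (by positivity) ?_
    calc ((∑ j, g j * f j) * ∑ i, H i i) ^ 2
        ≤ (∑ i, g i ^ 2) * (∑ j, f j ^ 2) * (∑ i, H i i) ^ 2 := by
          rw [mul_pow]
          gcongr
          exact sum_mul_sq_le_sq_mul_sq _ _ _
      _ ≤ c * w * (∑ j, f j ^ 2) * (∑ i, H i i) ^ 2 := by gcongr
      _ = _ := by ring
  rw [bochnerForm_eq]
  linarith [neg_abs_le (∑ i, ∑ j, g i * f j * H i j), le_abs_self ((∑ j, g j * f j) * ∑ i, H i i)]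

end Absorption

section LorentzAlgebra

variable {n : ℕ} (X : Fin (n + 1) → ℝ) (D : Fin (n + 1) → Fin (n + 1) → ℝ)

/-- The Minkowski square `t² - r²` of a point `X = (t, x)` of `ℝ × ℝⁿ`. -/
def minkowskiSq : ℝ := X 0 ^ 2 - ∑ i : Fin n, X i.succ ^ 2

/-- The weight `(t² - r²)² / (1 + t² + r²)`: a smooth substitute for `⟨t - r⟩²`, which is singular
at `r = 0`. -/
def coneWeight : ℝ := minkowskiSq X ^ 2 / (1 + ∑ a, X a ^ 2)

/-- The d'Alembertian `□u`, read off from the space-time Hessian `D` of `u`. -/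
def boxHess : ℝ := D 0 0 - ∑ i : Fin n, D i.succ i.succ

/-- The derivatives `S ∂_b u` at `X` along the scaling field, in terms of the Hessian `D` of `u`. -/
def scalHess (b : Fin (n + 1)) : ℝ := ∑ a, X a * D a b

/-- The derivatives `Ω_{ij} ∂_b u` at `X` along the rotations, in terms of the Hessian `D` of
`u`. -/
def rotHess (i j : Fin n) (b : Fin (n + 1)) : ℝ := X i.succ * D j.succ b - X j.succ * D i.succ b

/-- The sum of `|S ∂_b u|²` over all `b` and of `|Ω_{ij} ∂_b u|²` over all `b` and all ordered pairs
`(i, j)`, so that each rotation is counted twice. -/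
def scalRotSq : ℝ := ∑ b, scalHess X D b ^ 2 + ∑ j, ∑ i, ∑ b, rotHess X D i j b ^ 2

/-- The combination `S ∂_j u - ∑ i, Ω_{ij} ∂_i u`, in which all second derivatives cancel except
those in `t ∂_t ∂_j u + x_j Δu`. -/
def scalSubRot (j : Fin n) : ℝ := scalHess X D j.succ - ∑ i, rotHess X D i j i.succ

lemma coneWeight_nonneg : 0 ≤ coneWeight X := by unfold coneWeight; positivity

lemma scalRotSq_nonneg : 0 ≤ scalRotSq X D := by unfold scalRotSq; positivity

lemma sq_zero_le_sum_sq : X 0 ^ 2 ≤ ∑ a, X a ^ 2 :=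
  single_le_sum (f := fun a => X a ^ 2) (fun _ _ => sq_nonneg _) (mem_univ 0)

lemma sum_sq_succ_le_sum_sq : ∑ i : Fin n, X i.succ ^ 2 ≤ ∑ a, X a ^ 2 := by
  rw [Fin.sum_univ_succ]
  exact le_add_of_nonneg_left (sq_nonneg _)

lemma abs_minkowskiSq_le : |minkowskiSq X| ≤ ∑ a, X a ^ 2 := by
  rw [minkowskiSq, Fin.sum_univ_succ]
  have hspace : 0 ≤ ∑ i : Fin n, X i.succ ^ 2 := by positivity
  exact abs_sub_le_iff.2 ⟨by linarith, by nlinarith [sq_nonneg (X 0)]⟩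

lemma coneWeight_mul_le {a b : ℝ} (hb : 0 ≤ b)
    (h : minkowskiSq X ^ 2 * a ≤ (∑ c, X c ^ 2) * b) : coneWeight X * a ≤ b := by
  rw [coneWeight, div_mul_eq_mul_div, div_le_iff₀ (by positivity)]
  linarith

variable {D}

lemma scalSubRot_eq (hD : ∀ a b, D a b = D b a) (j : Fin n) :
    scalSubRot X D j = X 0 * D 0 j.succ + X j.succ * ∑ i : Fin n, D i.succ i.succ := by
  simp only [scalSubRot, scalHess, rotHess, Fin.sum_univ_succ, sum_sub_distrib, mul_sum,
    hD j.succ (Fin.succ _)]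
  ring

lemma sum_mul_scalSubRot_eq (hD : ∀ a b, D a b = D b a) :
    ∑ j, X j.succ * scalSubRot X D j = X 0 * scalHess X D 0 - X 0 ^ 2 * D 0 0
      + (∑ j : Fin n, X j.succ ^ 2) * ∑ i : Fin n, D i.succ i.succ := by
  have hterm : ∀ j : Fin n, X j.succ * scalSubRot X D j = X 0 * (X j.succ * D j.succ 0)
      + X j.succ ^ 2 * ∑ i : Fin n, D i.succ i.succ := fun j => by
    rw [scalSubRot_eq X hD, hD 0]
    ring
  rw [sum_congr rfl fun j _ => hterm j, sum_add_distrib, ← mul_sum, ← sum_mul, scalHess,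
    Fin.sum_univ_succ]
  ring

lemma minkowskiSq_mul_laplacian (hD : ∀ a b, D a b = D b a) :
    minkowskiSq X * ∑ i : Fin n, D i.succ i.succ =
      X 0 * scalHess X D 0 - ∑ j, X j.succ * scalSubRot X D j - X 0 ^ 2 * boxHess D := by
  rw [sum_mul_scalSubRot_eq X hD, minkowskiSq, boxHess]
  ring

lemma minkowskiSq_mul_time_time (hD : ∀ a b, D a b = D b a) :
    minkowskiSq X * D 0 0 = X 0 * scalHess X D 0 - ∑ j, X j.succ * scalSubRot X D j
      - (∑ j : Fin n, X j.succ ^ 2) * boxHess D := by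
  rw [sum_mul_scalSubRot_eq X hD, minkowskiSq, boxHess]
  ring

lemma minkowskiSq_mul_time_space (hD : ∀ a b, D a b = D b a) (j : Fin n) :
    minkowskiSq X * D 0 j.succ = X 0 * scalSubRot X D j - X j.succ * scalHess X D 0
      - ∑ i, X i.succ * rotHess X D i j 0 + X 0 * X j.succ * boxHess D := by
  have hrot : ∑ i, X i.succ * rotHess X D i j 0 = (∑ i : Fin n, X i.succ ^ 2) * D 0 j.succ
      - X j.succ * ∑ i : Fin n, X i.succ * D i.succ 0 := by
    rw [sum_mul, mul_sum, ← sum_sub_distrib]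
    refine sum_congr rfl fun i _ => ?_
    rw [rotHess, hD j.succ 0]
    ring
  rw [hrot, scalSubRot_eq X hD, scalHess, Fin.sum_univ_succ, minkowskiSq, boxHess]
  ring

lemma scalSubRot_sq_le (D : Fin (n + 1) → Fin (n + 1) → ℝ) (j : Fin n) :
    scalSubRot X D j ^ 2 ≤ 2 * scalHess X D j.succ ^ 2
      + 2 * (n * ∑ i, ∑ b, rotHess X D i j b ^ 2) := by
  have hrot : (∑ i, rotHess X D i j i.succ) ^ 2 ≤ n * ∑ i, ∑ b, rotHess X D i j b ^ 2 :=
    calc (∑ i, rotHess X D i j i.succ) ^ 2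
        ≤ n * ∑ i, rotHess X D i j i.succ ^ 2 := by
          simpa using sq_sum_le_card_mul_sum_sq (s := univ) (f := fun i => rotHess X D i j i.succ)
      _ ≤ n * ∑ i, ∑ b, rotHess X D i j b ^ 2 := by
          gcongr with i
          exact single_le_sum (f := fun b => rotHess X D i j b ^ 2) (fun _ _ => sq_nonneg _)
            (mem_univ i.succ)
  have hsq := add_sq_le (a := scalHess X D j.succ) (b := -∑ i, rotHess X D i j i.succ)
  rw [neg_sq, ← sub_eq_add_neg, ← scalSubRot] at hsq
  linarith

lemma scalHess_sq_add_sum_scalSubRot_sq_le (D : Fin (n + 1) → Fin (n + 1) → ℝ) :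
    scalHess X D 0 ^ 2 + ∑ j, scalSubRot X D j ^ 2 ≤ 2 * (n + 1) * scalRotSq X D := by
  have hsum := sum_le_sum fun j (_ : j ∈ univ) => scalSubRot_sq_le X D j
  rw [sum_add_distrib, ← mul_sum, ← mul_sum, ← mul_sum] at hsum
  rw [scalRotSq, Fin.sum_univ_succ]
  have hn : (0 : ℝ) ≤ n := n.cast_nonneg
  have htime := sq_nonneg (scalHess X D 0)
  have hspace : 0 ≤ ∑ j : Fin n, scalHess X D j.succ ^ 2 := by positivity
  have hrot : 0 ≤ ∑ j, ∑ i, ∑ b, rotHess X D i j b ^ 2 := by positivity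
  linarith [mul_nonneg hn htime, mul_nonneg hn hspace]

lemma scalHess_sub_sum_scalSubRot_sq_le (D : Fin (n + 1) → Fin (n + 1) → ℝ) :
    (X 0 * scalHess X D 0 - ∑ j, X j.succ * scalSubRot X D j) ^ 2
      ≤ (∑ a, X a ^ 2) * (2 * (n + 1) * scalRotSq X D) := by
  have hcs := sum_mul_sq_le_sq_mul_sq univ X
    (Fin.cons (scalHess X D 0) fun j => -scalSubRot X D j : Fin (n + 1) → ℝ)
  simp only [Fin.sum_univ_succ, Fin.cons_zero, Fin.cons_succ, mul_neg, sum_neg_distrib,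
    ← sub_eq_add_neg, neg_sq] at hcs
  rw [Fin.sum_univ_succ]
  exact hcs.trans (by gcongr; exact scalHess_sq_add_sum_scalSubRot_sq_le X D)

lemma coneWeight_mul_sq_le_of_eq {w c : ℝ} (hc : 0 ≤ c) (hcX : c ≤ ∑ a, X a ^ 2)
    (hw : minkowskiSq X * w = X 0 * scalHess X D 0 - ∑ j, X j.succ * scalSubRot X D j
      - c * boxHess D) :
    coneWeight X * w ^ 2 ≤
      4 * (n + 1) * scalRotSq X D + 2 * ((∑ a, X a ^ 2) * boxHess D ^ 2) := by
  have hG := scalRotSq_nonneg X D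
  have hsq := add_sq_le (a := X 0 * scalHess X D 0 - ∑ j, X j.succ * scalSubRot X D j)
    (b := -(c * boxHess D))
  have hbox : (c * boxHess D) ^ 2 ≤ (∑ a, X a ^ 2) ^ 2 * boxHess D ^ 2 := by
    rw [mul_pow]
    gcongr
  refine coneWeight_mul_le X (by positivity) ?_
  rw [← mul_pow, hw]
  rw [neg_sq, ← sub_eq_add_neg] at hsq
  linarith [scalHess_sub_sum_scalSubRot_sq_le X D]

lemma coneWeight_mul_laplacian_sq_le (hD : ∀ a b, D a b = D b a) :
    coneWeight X * (∑ i : Fin n, D i.succ i.succ) ^ 2 ≤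
      4 * (n + 1) * scalRotSq X D + 2 * ((∑ a, X a ^ 2) * boxHess D ^ 2) :=
  coneWeight_mul_sq_le_of_eq X (sq_nonneg _) (sq_zero_le_sum_sq X) (minkowskiSq_mul_laplacian X hD)

lemma coneWeight_mul_time_time_sq_le (hD : ∀ a b, D a b = D b a) :
    coneWeight X * D 0 0 ^ 2 ≤
      4 * (n + 1) * scalRotSq X D + 2 * ((∑ a, X a ^ 2) * boxHess D ^ 2) :=
  coneWeight_mul_sq_le_of_eq X (by positivity) (sum_sq_succ_le_sum_sq X)
    (minkowskiSq_mul_time_time X hD)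

lemma sum_sum_mul_rotHess_sq_le (D : Fin (n + 1) → Fin (n + 1) → ℝ) :
    ∑ j, (∑ i, X i.succ * rotHess X D i j 0) ^ 2
      ≤ (∑ i : Fin n, X i.succ ^ 2) * scalRotSq X D := by
  have hrot : ∑ j, ∑ i, rotHess X D i j 0 ^ 2 ≤ scalRotSq X D := by
    refine le_add_of_nonneg_of_le (by positivity) ?_
    gcongr with j _ i _
    exact single_le_sum (f := fun b => rotHess X D i j b ^ 2) (fun _ _ => sq_nonneg _) (mem_univ 0)
  calc ∑ j, (∑ i, X i.succ * rotHess X D i j 0) ^ 2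
      ≤ ∑ j, (∑ i : Fin n, X i.succ ^ 2) * ∑ i, rotHess X D i j 0 ^ 2 := by
        gcongr with j
        exact sum_mul_sq_le_sq_mul_sq _ _ _
    _ ≤ (∑ i : Fin n, X i.succ ^ 2) * scalRotSq X D := by
        rw [← mul_sum]
        gcongr

lemma coneWeight_mul_sum_time_space_sq_le (hD : ∀ a b, D a b = D b a) :
    coneWeight X * ∑ j : Fin n, D 0 j.succ ^ 2 ≤
      4 * (2 * (n + 1) + 1) * scalRotSq X D + 4 * ((∑ a, X a ^ 2) * boxHess D ^ 2) := by
  have hG := scalRotSq_nonneg X D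
  refine coneWeight_mul_le X (by positivity) ?_
  have hsum : minkowskiSq X ^ 2 * ∑ j : Fin n, D 0 j.succ ^ 2 ≤
      4 * (X 0 ^ 2 * ∑ j, scalSubRot X D j ^ 2
        + (∑ j : Fin n, X j.succ ^ 2) * scalHess X D 0 ^ 2
        + ∑ j, (∑ i, X i.succ * rotHess X D i j 0) ^ 2
        + X 0 ^ 2 * (∑ j : Fin n, X j.succ ^ 2) * boxHess D ^ 2) := by
    rw [mul_sum, mul_sum, sum_mul, mul_sum, sum_mul, ← sum_add_distrib, ← sum_add_distrib,
      ← sum_add_distrib, mul_sum]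
    refine sum_le_sum fun j _ => ?_
    rw [← mul_pow, minkowskiSq_mul_time_space X hD]
    simp only [← mul_pow]
    exact sub_sub_add_sq_le_four_mul _ _ _ _
  have hvec := scalHess_sq_add_sum_scalSubRot_sq_le X D
  have hrot := sum_sum_mul_rotHess_sq_le X D
  have ht := sq_zero_le_sum_sq X
  have hr := sum_sq_succ_le_sum_sq X
  calc _ ≤ _ := hsum
    _ ≤ 4 * ((∑ a, X a ^ 2) * ∑ j, scalSubRot X D j ^ 2
        + (∑ a, X a ^ 2) * scalHess X D 0 ^ 2 + (∑ a, X a ^ 2) * scalRotSq X D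
        + (∑ a, X a ^ 2) * (∑ a, X a ^ 2) * boxHess D ^ 2) := by
      gcongr
      exact hrot.trans (by gcongr)
    _ ≤ _ := by
      have hN : 0 ≤ ∑ a, X a ^ 2 := by positivity
      linarith [mul_le_mul_of_nonneg_left hvec hN]

lemma sum_sum_sq_eq_of_symm (hD : ∀ a b, D a b = D b a) :
    ∑ a, ∑ b, D a b ^ 2 = D 0 0 ^ 2 + 2 * ∑ j : Fin n, D 0 j.succ ^ 2
      + ∑ i : Fin n, ∑ j : Fin n, D i.succ j.succ ^ 2 := by
  simp only [Fin.sum_univ_succ, sum_add_distrib, fun i : Fin n => hD i.succ 0]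
  ring

lemma coneWeight_mul_hessian_sq_le {c : ℝ} {g : Fin n → ℝ} (f : Fin n → ℝ)
    (hD : ∀ a b, D a b = D b a) (hc : 0 ≤ c) (hg : ∑ i, g i ^ 2 ≤ c * coneWeight X) :
    coneWeight X * ∑ a, ∑ b, D a b ^ 2 ≤
      (32 * n + 40) * scalRotSq X D + 16 * ((∑ a, X a ^ 2) * boxHess D ^ 2)
        + 2 * c * ∑ j, f j ^ 2
        + 2 * bochnerForm (coneWeight X) g f fun i j => D i.succ j.succ := by
  have hspace := mul_sum_sum_sq_le_bochnerForm g f (fun i j => D i.succ j.succ)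
    (coneWeight_nonneg X) hc hg
  rw [sum_sum_sq_eq_of_symm hD]
  linarith [coneWeight_mul_time_time_sq_le X hD, coneWeight_mul_laplacian_sq_le X hD,
    coneWeight_mul_sum_time_space_sq_le X hD]

end LorentzAlgebra

section SpaceTimeCalculus

variable {u v : Pt → ℝ} {X : Pt}

lemma contDiff_pd {m n : WithTop ℕ∞} (hu : ContDiff ℝ n u) (hmn : m + 1 ≤ n) (a : Fin 4) :
    ContDiff ℝ m (pd a u) :=
  (hu.fderiv_right hmn).clm_apply contDiff_const

lemma continuous_pd (hu : ContDiff ℝ 1 u) (a : Fin 4) : Continuous (pd a u) :=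
  (contDiff_pd (m := 0) hu le_rfl a).continuous

lemma continuous_pd_pd (hu : ContDiff ℝ 2 u) (a b : Fin 4) : Continuous (pd a (pd b u)) :=
  continuous_pd (contDiff_pd hu (by norm_num) b) a

lemma tsupport_pd_subset (u : Pt → ℝ) (a : Fin 4) : tsupport (pd a u) ⊆ tsupport u :=
  tsupport_fderiv_apply_subset ℝ _

lemma pd_eq_zero_of_notMem_tsupport (hX : X ∉ tsupport u) (a : Fin 4) : pd a u X = 0 :=
  image_eq_zero_of_notMem_tsupport fun h => hX (tsupport_pd_subset u a h)

lemma hasCompactSupport_pd (hu : HasCompactSupport u) (a : Fin 4) : HasCompactSupport (pd a u) :=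
  hu.fderiv_apply ℝ _

lemma pd_comm (hu : ContDiff ℝ 2 u) (a b : Fin 4) : pd a (pd b u) = pd b (pd a u) := by
  have hsnd : ∀ (c d : Fin 4) (Y : Pt),
      pd c (pd d u) Y = fderiv ℝ (fderiv ℝ u) Y (Pi.single c 1) (Pi.single d 1) := fun c d Y => by
    have hdiff : DifferentiableAt ℝ (fderiv ℝ u) Y :=
      (hu.fderiv_right (m := 1) (by norm_num)).differentiable (by norm_num) Y
    change fderiv ℝ (fun Z => fderiv ℝ u Z (Pi.single d 1)) Y (Pi.single c 1) = _
    simp [fderiv_clm_apply hdiff (differentiableAt_const _)]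
  funext Y
  rw [hsnd, hsnd]
  exact hu.contDiffAt.isSymmSndFDerivAt (by simp) _ _

lemma pd_mul (hu : DifferentiableAt ℝ u X) (hv : DifferentiableAt ℝ v X) (a : Fin 4) :
    pd a (fun Y => u Y * v Y) X = pd a u X * v X + u X * pd a v X := by
  simp only [pd, fderiv_fun_mul hu hv, add_apply, _root_.smul_apply, smul_eq_mul]
  ring

lemma contDiff_Gam {m n : WithTop ℕ∞} (hu : ContDiff ℝ n u) (hmn : m + 1 ≤ n) (k : Fin 8) :
    ContDiff ℝ m (Gam k u) := by
  have hpd := contDiff_pd hu hmn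
  have hrot : ∀ i j, ContDiff ℝ m (rot i j u) := fun i j =>
    ((contDiff_apply ℝ ℝ i).mul (hpd j)).sub ((contDiff_apply ℝ ℝ j).mul (hpd i))
  have hscal : ContDiff ℝ m (scal u) := .sum fun a _ => (contDiff_apply ℝ ℝ a).mul (hpd a)
  fin_cases k
  exacts [hpd 0, hpd 1, hpd 2, hpd 3, hrot 1 2, hrot 1 3, hrot 2 3, hscal]

lemma hasCompactSupport_Gam (hu : HasCompactSupport u) (k : Fin 8) :
    HasCompactSupport (Gam k u) :=
  .intro hu fun X hX => by
    fin_cases k <;> simp [Gam, rot, scal, pd_eq_zero_of_notMem_tsupport hX]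

lemma contDiff_GamComp {m n : ℕ} (hu : ContDiff ℝ (n + m : ℕ) u) (α : Fin m → Fin 8) :
    ContDiff ℝ n (GamComp α u) := by
  induction m generalizing n with
  | zero => exact hu
  | succ m ih =>
    refine contDiff_Gam (n := (n + 1 : ℕ)) (ih (hu.of_le ?_) _) (by norm_num) _
    exact_mod_cast (Nat.succ_add_eq_add_succ n m).le

lemma hasCompactSupport_GamComp {m : ℕ} (hu : HasCompactSupport u) (α : Fin m → Fin 8) :
    HasCompactSupport (GamComp α u) := by
  induction m with
  | zero => exact hu
  | succ m ih => exact hasCompactSupport_Gam (ih _) _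

end SpaceTimeCalculus

section TimeSlices

lemma isClosedEmbedding_finCons (t : ℝ) :
    Topology.IsClosedEmbedding fun x : Sp => (Fin.cons t x : Pt) :=
  Function.LeftInverse.isClosedEmbedding (f := fun X : Pt => (fun i => X i.succ : Sp))
    (fun _ => rfl) (continuous_pi fun i => continuous_apply i.succ)
    (continuous_const.finCons continuous_id)

variable {V : Pt → ℝ}

lemma continuous_slice (hV : Continuous V) (t : ℝ) : Continuous fun x : Sp => V (Fin.cons t x) :=
  hV.comp (isClosedEmbedding_finCons t).continuous

lemma hasCompactSupport_slice (hc : HasCompactSupport V) (t : ℝ) :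
    HasCompactSupport fun x : Sp => V (Fin.cons t x) :=
  hc.comp_isClosedEmbedding (isClosedEmbedding_finCons t)

lemma integrable_slice (hV : Continuous V) (hc : HasCompactSupport V) (t : ℝ) :
    Integrable fun x : Sp => V (Fin.cons t x) :=
  (continuous_slice hV t).integrable_of_hasCompactSupport (hasCompactSupport_slice hc t)

lemma fderiv_slice (t : ℝ) (x : Sp) (hV : DifferentiableAt ℝ V (Fin.cons t x)) (i : Fin 3) :
    fderiv ℝ (fun y : Sp => V (Fin.cons t y)) x (Pi.single i 1) = pd i.succ V (Fin.cons t x) := by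
  have hcons : HasFDerivAt (fun y : Sp => (Fin.cons t y : Pt))
      ((0 : Sp →L[ℝ] ℝ).finCons (ContinuousLinearMap.id ℝ Sp)) x :=
    (hasFDerivAt_const t x).finCons (hasFDerivAt_id x)
  have hbasis : (Fin.cons 0 (Pi.single i 1) : Pt) = Pi.single i.succ 1 := by
    ext k
    cases k using Fin.cases <;> simp [Pi.single_apply]
  rw [pd, ← hbasis]
  exact congrArg (fun L => L (Pi.single i 1)) (hV.hasFDerivAt.comp x hcons).fderiv

lemma integral_slice_pd_succ_eq_zero (hV : ContDiff ℝ 1 V) (hc : HasCompactSupport V) (t : ℝ)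
    (i : Fin 3) : ∫ x : Sp, pd i.succ V (Fin.cons t x) = 0 := by
  have hslice : ContDiff ℝ 1 fun x : Sp => V (Fin.cons t x) :=
    hV.comp (contDiff_pi.2 fun k => by
      cases k using Fin.cases <;> simp only [Fin.cons_zero, Fin.cons_succ] <;> fun_prop)
  simp_rw [← fun x => fderiv_slice t x (hV.differentiable one_ne_zero _) i]
  exact integral_fderiv_apply_eq_zero volume hslice
    (hasCompactSupport_slice hc t) _

end TimeSlices

section BochnerIdentity

variable {w u : Pt → ℝ}

/-- The integrand of the spatial Bochner identity for the function `u` with the weight `w`. -/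
def bochnerAt (w u : Pt → ℝ) (X : Pt) : ℝ :=
  bochnerForm (w X) (fun i : Fin 3 => pd i.succ w X) (fun j => pd j.succ u X)
    fun i j => pd i.succ (pd j.succ u) X

/-- The products `w ∂_a u ∂_b∂_c u`, of which the Bochner integrand is a spatial divergence. -/
def bochnerFlux (w u : Pt → ℝ) (a b c : Fin 4) (X : Pt) : ℝ :=
  w X * (pd a u X * pd b (pd c u) X)

lemma contDiff_bochnerFlux (hw : ContDiff ℝ 1 w) (hu : ContDiff ℝ 3 u) (a b c : Fin 4) :
    ContDiff ℝ 1 (bochnerFlux w u a b c) :=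
  hw.mul ((contDiff_pd hu (by norm_num) a).mul
    (contDiff_pd (contDiff_pd (m := 2) hu (by norm_num) c) (by norm_num) b))

lemma hasCompactSupport_bochnerFlux (hu : HasCompactSupport u) (a b c : Fin 4) :
    HasCompactSupport (bochnerFlux w u a b c) :=
  ((hasCompactSupport_pd hu a).mul_right (f' := pd b (pd c u))).mul_left

lemma pd_bochnerFlux (hw : ContDiff ℝ 1 w) (hu : ContDiff ℝ 3 u) (a b c d : Fin 4) (X : Pt) :
    pd d (bochnerFlux w u a b c) X = pd d w X * (pd a u X * pd b (pd c u) X)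
      + w X * (pd d (pd a u) X * pd b (pd c u) X + pd a u X * pd d (pd b (pd c u)) X) := by
  have hfst : Differentiable ℝ (pd a u) :=
    (contDiff_pd (m := 2) hu (by norm_num) a).differentiable (by norm_num)
  have hsnd : Differentiable ℝ (pd b (pd c u)) :=
    (contDiff_pd (m := 1) (contDiff_pd (m := 2) hu (by norm_num) c)
      (by norm_num) b).differentiable (by norm_num)
  unfold bochnerFlux
  rw [pd_mul (v := fun Y => pd a u Y * pd b (pd c u) Y) (hw.differentiable (by norm_num) X)
    ((hfst X).mul (hsnd X)), pd_mul (hfst X) (hsnd X)]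

lemma bochnerAt_eq_sum_pd (hw : ContDiff ℝ 1 w) (hu : ContDiff ℝ 3 u) (X : Pt) :
    bochnerAt w u X = ∑ i : Fin 3, ∑ j : Fin 3,
      (pd i.succ (bochnerFlux w u j.succ i.succ j.succ) X
        - pd j.succ (bochnerFlux w u j.succ i.succ i.succ) X) := by
  unfold bochnerAt bochnerForm
  refine sum_congr rfl fun i _ => sum_congr rfl fun j _ => ?_
  have hthird : pd i.succ (pd i.succ (pd j.succ u)) = pd j.succ (pd i.succ (pd i.succ u)) := by
    rw [pd_comm (hu.of_le (by norm_num)), pd_comm (contDiff_pd hu (by norm_num) _)]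
  rw [pd_bochnerFlux hw hu, pd_bochnerFlux hw hu, hthird]
  ring

lemma integrable_slice_pd_bochnerFlux (hw : ContDiff ℝ 1 w) (hu : ContDiff ℝ 3 u)
    (hc : HasCompactSupport u) (a b c d : Fin 4) (t : ℝ) :
    Integrable fun x : Sp => pd d (bochnerFlux w u a b c) (Fin.cons t x) :=
  integrable_slice (continuous_pd (contDiff_bochnerFlux hw hu a b c) d)
    (hasCompactSupport_pd (hasCompactSupport_bochnerFlux hc a b c) d) t

lemma integrable_bochnerAt (hw : ContDiff ℝ 1 w) (hu : ContDiff ℝ 3 u)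
    (hc : HasCompactSupport u) (t : ℝ) :
    Integrable fun x : Sp => bochnerAt w u (Fin.cons t x) := by
  simp_rw [bochnerAt_eq_sum_pd hw hu]
  exact integrable_finsetSum _ fun i _ => integrable_finsetSum _ fun j _ =>
    (integrable_slice_pd_bochnerFlux hw hu hc _ _ _ _ t).sub
      (integrable_slice_pd_bochnerFlux hw hu hc _ _ _ _ t)

lemma integral_bochnerAt_eq_zero (hw : ContDiff ℝ 1 w) (hu : ContDiff ℝ 3 u)
    (hc : HasCompactSupport u) (t : ℝ) : ∫ x : Sp, bochnerAt w u (Fin.cons t x) = 0 := by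
  have hint := fun a b c d => integrable_slice_pd_bochnerFlux hw hu hc a b c d t
  have hdiff : ∀ i j : Fin 3, Integrable fun x : Sp =>
      pd i.succ (bochnerFlux w u j.succ i.succ j.succ) (Fin.cons t x)
        - pd j.succ (bochnerFlux w u j.succ i.succ i.succ) (Fin.cons t x) :=
    fun i j => (hint _ _ _ _).sub (hint _ _ _ _)
  have hzero := fun a b c d => integral_slice_pd_succ_eq_zero (contDiff_bochnerFlux hw hu a b c)
    (hasCompactSupport_bochnerFlux hc a b c) t d
  simp_rw [bochnerAt_eq_sum_pd hw hu]
  rw [integral_finsetSum _ fun i _ => integrable_finsetSum _ fun j _ => hdiff i j]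
  refine sum_eq_zero fun i _ => ?_
  rw [integral_finsetSum _ fun j _ => hdiff i j]
  exact sum_eq_zero fun j _ => by
    rw [integral_sub (hint _ _ _ _) (hint _ _ _ _), hzero, hzero, sub_zero]

end BochnerIdentity

section Brackets

lemma jb_sq (z : ℝ) : jb z ^ 2 = 1 + z ^ 2 := sq_sqrt (by positivity)

lemma jb_pos (z : ℝ) : 0 < jb z := sqrt_pos.2 (by positivity)

lemma jb_le_jb {y z : ℝ} (h : |y| ≤ |z|) : jb y ≤ jb z :=
  sqrt_le_sqrt (add_le_add_right (sq_le_sq.2 h) 1)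

lemma continuous_jb : Continuous jb := by unfold jb; fun_prop

lemma rad_nonneg (x : Sp) : 0 ≤ rad x := sqrt_nonneg _

lemma rad_sq (x : Sp) : rad x ^ 2 = ∑ i, x i ^ 2 := sq_sqrt (by positivity)

lemma continuous_rad : Continuous rad := by unfold rad; fun_prop

lemma sum_sq_cons (t : ℝ) (x : Sp) :
    ∑ a, (Fin.cons t x : Pt) a ^ 2 = t ^ 2 + rad x ^ 2 := by
  rw [rad_sq, Fin.sum_univ_succ]
  rfl

lemma sum_sq_cons_le_jb_sq {t : ℝ} (ht : 0 ≤ t) (x : Sp) :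
    ∑ a, (Fin.cons t x : Pt) a ^ 2 ≤ jb (t + rad x) ^ 2 := by
  rw [sum_sq_cons, jb_sq]
  linarith [mul_nonneg ht (rad_nonneg x)]

lemma coneWeight_cons (t : ℝ) (x : Sp) :
    coneWeight (Fin.cons t x : Pt) = (t ^ 2 - rad x ^ 2) ^ 2 / (1 + (t ^ 2 + rad x ^ 2)) := by
  rw [coneWeight, minkowskiSq, sum_sq_cons, rad_sq]
  rfl

lemma jb_sub_rad_sq_le {t : ℝ} (ht : 0 ≤ t) (x : Sp) :
    jb (t - rad x) ^ 2 ≤ 2 + 2 * coneWeight (Fin.cons t x : Pt) := by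
  have hr := rad_nonneg x
  rw [jb_sq, coneWeight_cons]
  suffices ((t - rad x) ^ 2 - 1) / 2 ≤ (t ^ 2 - rad x ^ 2) ^ 2 / (1 + (t ^ 2 + rad x ^ 2)) by
    linarith
  -- `(t² - r²)² = (t - r)² (t + r)²`, where `(t - r)² ≤ t² + r² ≤ (t + r)²`
  rw [le_div_iff₀ (by positivity)]
  have htr := mul_nonneg ht hr
  nlinarith [mul_nonneg htr (sq_nonneg (t - rad x)), sq_nonneg ((t - rad x) ^ 2)]

lemma jb_sub_rad_div_mul_nonneg (t : ℝ) (x : Sp) {a b : ℝ} (ha : 0 ≤ a) (hb : 0 ≤ b) :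
    0 ≤ jb (t - rad x) / jb (t + rad x) * a * b * (jb (rad x))⁻¹ :=
  mul_nonneg (mul_nonneg (mul_nonneg (div_nonneg (jb_pos _).le (jb_pos _).le) ha) hb)
    (inv_nonneg.2 (jb_pos _).le)

lemma jb_sub_rad_div_mul_le {t : ℝ} (ht : 0 ≤ t) (x : Sp) {a b : ℝ} (ha : 0 ≤ a) (hb : 0 ≤ b) :
    jb (t - rad x) / jb (t + rad x) * a * b * (jb (rad x))⁻¹
      ≤ (jb t)⁻¹ * (jb (t - rad x) * a * (b / jb (rad x))) := by
  have hjb : jb t ≤ jb (t + rad x) :=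
    jb_le_jb (abs_le_abs_of_nonneg ht (le_add_of_nonneg_right (rad_nonneg x)))
  calc _ = (jb (t + rad x))⁻¹ * (jb (t - rad x) * a * (b / jb (rad x))) := by ring
    _ ≤ _ := mul_le_mul_of_nonneg_right (inv_anti₀ (jb_pos t) hjb)
      (mul_nonneg (mul_nonneg (jb_pos _).le ha) (div_nonneg hb (jb_pos _).le))

end Brackets

section WeightGradient

lemma contDiff_minkowskiSq {m : WithTop ℕ∞} {n : ℕ} :
    ContDiff ℝ m (minkowskiSq (n := n)) := by
  unfold minkowskiSq
  fun_prop

lemma contDiff_coneWeight {m : WithTop ℕ∞} {n : ℕ} :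
    ContDiff ℝ m (coneWeight (n := n)) := by
  unfold coneWeight
  exact (contDiff_minkowskiSq.pow 2).div (by fun_prop) fun X => by positivity

lemma pd_sum_mul_sq (c : Fin 4 → ℝ) (a : Fin 4) (X : Pt) :
    pd a (fun Y => ∑ b, c b * Y b ^ 2) X = 2 * (c a * X a) := by
  have hsq : ∀ b, HasFDerivAt (fun Y : Pt => c b * Y b ^ 2)
      ((c b * (2 * X b)) • ContinuousLinearMap.proj (R := ℝ) b) X := fun b => by
    have hproj : HasFDerivAt (fun Y : Pt => Y b) (ContinuousLinearMap.proj (R := ℝ) b) X :=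
      (ContinuousLinearMap.proj (R := ℝ) (φ := fun _ : Fin 4 => ℝ) b).hasFDerivAt
    simpa [mul_smul] using (hproj.pow 2).const_mul (c b)
  rw [pd, (HasFDerivAt.fun_sum fun b _ => hsq b).fderiv]
  simp only [_root_.sum_apply, smul_apply, ContinuousLinearMap.proj_apply, Pi.single_apply,
    smul_eq_mul, mul_ite, mul_one, mul_zero, sum_ite_eq', mem_univ, if_true]
  ring

lemma pd_succ_minkowskiSq (i : Fin 3) (X : Pt) : pd i.succ minkowskiSq X = -(2 * X i.succ) := by
  have hquad : minkowskiSq (n := 3) =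
      fun Y => ∑ b, (Fin.cons 1 fun _ => -1 : Fin 4 → ℝ) b * Y b ^ 2 := by
    funext Y
    rw [Fin.sum_univ_succ]
    simp [minkowskiSq, sub_eq_add_neg]
  rw [hquad, pd_sum_mul_sq, Fin.cons_succ]
  ring

lemma pd_succ_one_add_sum_sq (i : Fin 3) (X : Pt) :
    pd i.succ (fun Y => 1 + ∑ a, Y a ^ 2) X = 2 * X i.succ := by
  have h := pd_sum_mul_sq (fun _ => 1) i.succ X
  simp only [one_mul] at h
  rwa [pd, fderiv_const_add]

lemma coneWeight_mul_one_add_sum_sq {n : ℕ} (X : Fin (n + 1) → ℝ) :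
    coneWeight X * (1 + ∑ a, X a ^ 2) = minkowskiSq X * minkowskiSq X := by
  rw [coneWeight, div_mul_cancel₀ _ (by positivity), sq]

lemma pd_succ_coneWeight_mul (i : Fin 3) (X : Pt) :
    pd i.succ coneWeight X * (1 + ∑ a, X a ^ 2) =
      -(2 * X i.succ * (2 * minkowskiSq X + coneWeight X)) := by
  have hp : DifferentiableAt ℝ (minkowskiSq (n := 3)) X :=
    (contDiff_minkowskiSq (m := 1)).differentiable one_ne_zero X
  have hw : DifferentiableAt ℝ (coneWeight (n := 3)) X :=
    (contDiff_coneWeight (m := 1)).differentiable one_ne_zero X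
  have h := congrArg (fun f => pd i.succ f X) (funext (coneWeight_mul_one_add_sum_sq (n := 3)))
  rw [pd_mul hw (by fun_prop), pd_mul hp hp, pd_succ_one_add_sum_sq, pd_succ_minkowskiSq] at h
  linarith

lemma two_mul_minkowskiSq_add_coneWeight_sq_le {n : ℕ} (X : Fin (n + 1) → ℝ) :
    (2 * minkowskiSq X + coneWeight X) ^ 2 ≤ 9 * (coneWeight X * (1 + ∑ a, X a ^ 2)) := by
  have hle : coneWeight X ≤ |minkowskiSq X| := by
    rw [coneWeight, div_le_iff₀ (by positivity), ← sq_abs, sq]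
    gcongr
    linarith [abs_minkowskiSq_le X]
  calc (2 * minkowskiSq X + coneWeight X) ^ 2
      ≤ (3 * |minkowskiSq X|) ^ 2 := by
        rw [sq_le_sq, abs_of_nonneg (a := 3 * _) (by positivity)]
        refine (abs_add_le _ _).trans ?_
        rw [abs_mul, abs_two, abs_of_nonneg (coneWeight_nonneg X)]
        linarith
    _ = 9 * (coneWeight X * (1 + ∑ a, X a ^ 2)) := by
        rw [coneWeight_mul_one_add_sum_sq, mul_pow, sq_abs]
        ring

lemma sum_sq_pd_succ_coneWeight_le (X : Pt) :
    ∑ i : Fin 3, pd i.succ coneWeight X ^ 2 ≤ 36 * coneWeight X := by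
  have hr : ∑ i : Fin 3, X i.succ ^ 2 ≤ 1 + ∑ a, X a ^ 2 := by
    linarith [sum_sq_succ_le_sum_sq X]
  refine le_of_mul_le_mul_right ?_ (show 0 < (1 + ∑ a, X a ^ 2) ^ 2 by positivity)
  calc (∑ i : Fin 3, pd i.succ coneWeight X ^ 2) * (1 + ∑ a, X a ^ 2) ^ 2
      = 4 * ((∑ i : Fin 3, X i.succ ^ 2) * (2 * minkowskiSq X + coneWeight X) ^ 2) := by
        simp only [sum_mul, ← mul_pow, pd_succ_coneWeight_mul, mul_sum]
        exact sum_congr rfl fun i _ => by ring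
    _ ≤ 4 * ((1 + ∑ a, X a ^ 2) * (9 * (coneWeight X * (1 + ∑ a, X a ^ 2)))) := by
        gcongr
        exact two_mul_minkowskiSq_add_coneWeight_sq_le X
    _ = _ := by ring

end WeightGradient

section EnergyDensity

variable {u : Pt → ℝ}

/-- The sum of the squares of all the functions whose `L²` norms add up to `Qfac cs u t`. -/
def qDensity (cs : ℝ) (u : Pt → ℝ) (t : ℝ) (x : Sp) : ℝ :=
  (∑ m ∈ range 2, ∑ α : Fin m → Fin 8, ∑ a, GamComp α (pd a u) (Fin.cons t x) ^ 2)
    + jb (t + rad x) ^ 2 * boxc cs u (Fin.cons t x) ^ 2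

lemma qDensity_eq (cs : ℝ) (u : Pt → ℝ) (t : ℝ) (x : Sp) :
    qDensity cs u t x = ∑ a, pd a u (Fin.cons t x) ^ 2
      + ∑ k, ∑ a, Gam k (pd a u) (Fin.cons t x) ^ 2
      + jb (t + rad x) ^ 2 * boxc cs u (Fin.cons t x) ^ 2 := by
  have hone : ∑ α : Fin 1 → Fin 8, ∑ a, GamComp α (pd a u) (Fin.cons t x) ^ 2
      = ∑ k, ∑ a, Gam k (pd a u) (Fin.cons t x) ^ 2 :=
    (Equiv.funUnique (Fin 1) (Fin 8)).sum_comp fun k => ∑ a, Gam k (pd a u) (Fin.cons t x) ^ 2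
  rw [qDensity, sum_range_succ, sum_range_one, hone, Fintype.sum_unique]
  rfl

lemma integrable_sum_sq_GamComp {m : ℕ} (hu : ContDiff ℝ (m + 1 : ℕ) u)
    (hc : HasCompactSupport u) (α : Fin m → Fin 8) (t : ℝ) :
    Integrable fun x : Sp => ∑ a, GamComp α (pd a u) (Fin.cons t x) ^ 2 :=
  integrable_finsetSum _ fun a _ =>
    integrable_slice (V := fun X => GamComp α (pd a u) X ^ 2)
      ((contDiff_GamComp (n := 0) (contDiff_pd hu (by simp) a) α).continuous.pow 2)
      ((hasCompactSupport_GamComp (hasCompactSupport_pd hc a) α).comp_left (g := (· ^ 2)) (by simp))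
      t

lemma continuous_boxc (hu : ContDiff ℝ 2 u) (cs : ℝ) : Continuous (boxc cs u) :=
  (continuous_pd_pd hu 0 0).sub
    (continuous_const.mul (continuous_finsetSum _ fun _ _ => continuous_pd_pd hu _ _))

lemma hasCompactSupport_boxc (hc : HasCompactSupport u) (cs : ℝ) :
    HasCompactSupport (boxc cs u) :=
  .intro hc fun X hX => by
    have hpd : ∀ a, pd a (pd a u) X = 0 := fun a =>
      pd_eq_zero_of_notMem_tsupport (fun h => hX (tsupport_pd_subset u a h)) a
    simp [boxc, hpd]

lemma integrable_jb_sq_mul_boxc_sq (hu : ContDiff ℝ 2 u) (hc : HasCompactSupport u) (cs t : ℝ) :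
    Integrable fun x : Sp => jb (t + rad x) ^ 2 * boxc cs u (Fin.cons t x) ^ 2 := by
  have hbox := continuous_slice (continuous_boxc hu cs) t
  have hjb : Continuous fun x : Sp => jb (t + rad x) :=
    continuous_jb.comp (continuous_const.add continuous_rad)
  have hsupp := (hasCompactSupport_slice (hasCompactSupport_boxc hc cs) t).comp_left
    (g := (· ^ 2)) (by simp)
  exact ((hjb.pow 2).mul (hbox.pow 2)).integrable_of_hasCompactSupport hsupp.mul_left

lemma integrable_sum_sq_GamComp_of_mem_range_two (hu : ContDiff ℝ 2 u)
    (hc : HasCompactSupport u) (t : ℝ) :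
    ∀ m ∈ range 2, ∀ α : Fin m → Fin 8,
      Integrable fun x : Sp => ∑ a, GamComp α (pd a u) (Fin.cons t x) ^ 2 := fun m hm α =>
  integrable_sum_sq_GamComp (hu.of_le (by exact_mod_cast mem_range.1 hm)) hc α t

lemma integrable_qDensity (hu : ContDiff ℝ 2 u) (hc : HasCompactSupport u) (cs t : ℝ) :
    Integrable (qDensity cs u t) :=
  (integrable_finsetSum _ fun m hm => integrable_finsetSum _ fun α _ =>
    integrable_sum_sq_GamComp_of_mem_range_two hu hc t m hm α).add
    (integrable_jb_sq_mul_boxc_sq hu hc cs t)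

lemma Qfac_nonneg (cs : ℝ) (u : Pt → ℝ) (t : ℝ) : 0 ≤ Qfac cs u t := by
  unfold Qfac
  positivity

lemma integral_qDensity_le_Qfac_sq (hu : ContDiff ℝ 2 u) (hc : HasCompactSupport u) (cs t : ℝ) :
    ∫ x, qDensity cs u t x ≤ Qfac cs u t ^ 2 := by
  have hGam := integrable_sum_sq_GamComp_of_mem_range_two hu hc t
  unfold qDensity
  rw [integral_add (integrable_finsetSum _ fun m hm => integrable_finsetSum _ fun α _ =>
      hGam m hm α) (integrable_jb_sq_mul_boxc_sq hu hc cs t),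
    integral_finsetSum _ fun m hm => integrable_finsetSum _ fun α _ => hGam m hm α,
    sum_congr rfl fun m hm => integral_finsetSum _ fun α _ => hGam m hm α, Qfac]
  simp only [sum_sigma', ← sqrt_eq_rpow]
  exact sum_add_le_sq_sum_sqrt_add_sqrt (fun _ _ => by positivity) (by positivity)

end EnergyDensity

section HessianEstimate

variable {u v : Pt → ℝ}

lemma boxc_one (u : Pt → ℝ) (X : Pt) : boxc 1 u X = boxHess fun a b => pd a (pd b u) X := by
  simp [boxc, boxHess]

lemma scalRotSq_add_hessian_sq_le (u : Pt → ℝ) (X : Pt) :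
    scalRotSq X (fun a b => pd a (pd b u) X) + 2 * ∑ a, ∑ b, pd a (pd b u) X ^ 2
      ≤ 2 * ∑ k, ∑ b, Gam k (pd b u) X ^ 2 := by
  set D := fun a b => pd a (pd b u) X
  have hdiag : ∀ i b, rotHess X D i i b = 0 := fun i b => sub_self _
  have hanti : ∀ i j b, rotHess X D i j b ^ 2 = rotHess X D j i b ^ 2 := fun i j b => by
    rw [rotHess, rotHess, sub_sq_comm]
  have hGam : ∑ k, ∑ b, Gam k (pd b u) X ^ 2 = ∑ a, ∑ b, D a b ^ 2
      + ∑ b, (rotHess X D 0 1 b ^ 2 + rotHess X D 0 2 b ^ 2 + rotHess X D 1 2 b ^ 2)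
      + ∑ b, scalHess X D b ^ 2 := by
    simp only [Fin.sum_univ_eight, Fin.sum_univ_four (fun a => ∑ b, D a b ^ 2), sum_add_distrib,
      ← add_assoc]
    rfl
  have hscal : 0 ≤ ∑ b, scalHess X D b ^ 2 := by positivity
  have hrot : ∑ j, ∑ i, ∑ b, rotHess X D i j b ^ 2 =
      2 * ∑ b, (rotHess X D 0 1 b ^ 2 + rotHess X D 0 2 b ^ 2 + rotHess X D 1 2 b ^ 2) := by
    simp only [Fin.sum_univ_three, hdiag, hanti 1 0, hanti 2 0, hanti 2 1, sum_add_distrib]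
    simp only [zero_pow two_ne_zero, sum_const_zero]
    ring
  rw [hGam, scalRotSq, hrot]
  linarith

lemma d2abs_sq_le (u : Pt → ℝ) (X : Pt) :
    d2abs u X ^ 2 ≤ 16 * ∑ a, ∑ b, pd a (pd b u) X ^ 2 := by
  have h := sq_sum_le_card_mul_sum_sq (s := univ)
    (f := fun p : Fin 4 × Fin 4 => |pd p.1 (pd p.2 u) X|)
  simp only [sq_abs, Fintype.sum_prod_type] at h
  simpa [d2abs] using h

lemma jb_sub_rad_mul_d2abs_sq_le (hu : ContDiff ℝ 2 u) {t : ℝ} (ht : 0 ≤ t) (x : Sp) :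
    (jb (t - rad x) * d2abs u (Fin.cons t x)) ^ 2
      ≤ 10000 * qDensity 1 u t x + 64 * bochnerAt coneWeight u (Fin.cons t x) := by
  set X : Pt := Fin.cons t x
  have hhess := coneWeight_mul_hessian_sq_le X (fun j : Fin 3 => pd j.succ u X)
    (fun a b => congrFun (pd_comm hu a b) X) (by norm_num) (sum_sq_pd_succ_coneWeight_le X)
  have hGam := scalRotSq_add_hessian_sq_le u X
  have hbox : (∑ a, X a ^ 2) * boxHess (fun a b => pd a (pd b u) X) ^ 2
      ≤ jb (t + rad x) ^ 2 * boxc 1 u X ^ 2 := by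
    rw [boxc_one]
    gcongr
    exact sum_sq_cons_le_jb_sq ht x
  have hgrad := sum_sq_succ_le_sum_sq fun a => pd a u X
  have hweight : (jb (t - rad x) * d2abs u X) ^ 2 ≤
      (2 + 2 * coneWeight X) * (16 * ∑ a, ∑ b, pd a (pd b u) X ^ 2) := by
    rw [mul_pow]
    exact mul_le_mul (jb_sub_rad_sq_le ht x) (d2abs_sq_le u X) (sq_nonneg _)
      (by linarith [coneWeight_nonneg X])
  have hD : 0 ≤ ∑ a, ∑ b, pd a (pd b u) X ^ 2 := by positivity
  have hG : 0 ≤ ∑ k, ∑ b, Gam k (pd b u) X ^ 2 := by positivity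
  have hU : 0 ≤ ∑ a, pd a u X ^ 2 := by positivity
  have hB : 0 ≤ jb (t + rad x) ^ 2 * boxc 1 u X ^ 2 := by positivity
  rw [qDensity_eq, bochnerAt]
  simp only [Nat.cast_ofNat] at hhess
  linarith

lemma d2abs_nonneg (u : Pt → ℝ) (X : Pt) : 0 ≤ d2abs u X := by unfold d2abs; positivity

lemma gradNorm_nonneg (v : Pt → ℝ) (X : Pt) : 0 ≤ gradNorm v X := sqrt_nonneg _

lemma gradNorm_div_jb_sq (v : Pt → ℝ) (X : Pt) (r : ℝ) :
    (gradNorm v X / jb r) ^ 2 = (∑ a, pd a v X ^ 2) / jb r ^ 2 := by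
  rw [div_pow, gradNorm, sq_sqrt (by positivity)]

lemma continuous_d2abs (hu : ContDiff ℝ 2 u) : Continuous (d2abs u) :=
  continuous_finsetSum _ fun a _ => continuous_finsetSum _ fun b _ => (continuous_pd_pd hu a b).abs

lemma hasCompactSupport_d2abs (hc : HasCompactSupport u) : HasCompactSupport (d2abs u) :=
  .intro hc fun X hX => by
    simp [d2abs, pd_eq_zero_of_notMem_tsupport fun h => hX (tsupport_pd_subset u _ h)]

lemma continuous_gradNorm (hv : ContDiff ℝ 1 v) : Continuous (gradNorm v) :=
  continuous_sqrt.comp (continuous_finsetSum _ fun a _ => (continuous_pd hv a).pow 2)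

lemma hasCompactSupport_gradNorm (hc : HasCompactSupport v) : HasCompactSupport (gradNorm v) :=
  .intro hc fun X hX => by simp [gradNorm, pd_eq_zero_of_notMem_tsupport hX]

lemma memLp_jb_sub_rad_mul_d2abs (hu : ContDiff ℝ 2 u) (hc : HasCompactSupport u) (t : ℝ) :
    MemLp (fun x : Sp => jb (t - rad x) * d2abs u (Fin.cons t x)) 2 :=
  ((continuous_jb.comp (continuous_const.sub continuous_rad)).mul
    (continuous_slice (continuous_d2abs hu) t)).memLp_of_hasCompactSupport
    (hasCompactSupport_slice (hasCompactSupport_d2abs hc) t).mul_left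

lemma memLp_gradNorm_div_jb_rad (hv : ContDiff ℝ 1 v) (hc : HasCompactSupport v) (t : ℝ) :
    MemLp (fun x : Sp => gradNorm v (Fin.cons t x) / jb (rad x)) 2 := by
  simp only [div_eq_mul_inv]
  exact ((continuous_slice (continuous_gradNorm hv) t).mul
    ((continuous_jb.comp continuous_rad).inv₀ fun x => (jb_pos _).ne')).memLp_of_hasCompactSupport
    (hasCompactSupport_slice (hasCompactSupport_gradNorm hc) t).mul_right

lemma integral_jb_sub_rad_mul_d2abs_sq_le (hu : ContDiff ℝ 3 u) (hc : HasCompactSupport u) {t : ℝ}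
    (ht : 0 ≤ t) :
    ∫ x : Sp, (jb (t - rad x) * d2abs u (Fin.cons t x)) ^ 2 ≤ 10000 * Qfac 1 u t ^ 2 := by
  have hu2 : ContDiff ℝ 2 u := hu.of_le (by norm_num)
  have hq := (integrable_qDensity hu2 hc 1 t).const_mul 10000
  have hb := (integrable_bochnerAt contDiff_coneWeight hu hc t).const_mul 64
  calc ∫ x : Sp, (jb (t - rad x) * d2abs u (Fin.cons t x)) ^ 2
      ≤ ∫ x : Sp, (10000 * qDensity 1 u t x + 64 * bochnerAt coneWeight u (Fin.cons t x)) :=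
        integral_mono (memLp_jb_sub_rad_mul_d2abs hu2 hc t).integrable_sq (hq.add hb)
          (jb_sub_rad_mul_d2abs_sq_le hu2 ht)
    _ = 10000 * ∫ x : Sp, qDensity 1 u t x := by
        rw [integral_add hq hb, integral_const_mul, integral_const_mul,
          integral_bochnerAt_eq_zero contDiff_coneWeight hu hc, mul_zero, add_zero]
    _ ≤ 10000 * Qfac 1 u t ^ 2 := by
        gcongr
        exact integral_qDensity_le_Qfac_sq hu2 hc 1 t

lemma sqrt_integral_jb_sub_rad_mul_d2abs_sq_le (hu : ContDiff ℝ 3 u) (hc : HasCompactSupport u)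
    {t : ℝ} (ht : 0 ≤ t) :
    √(∫ x : Sp, (jb (t - rad x) * d2abs u (Fin.cons t x)) ^ 2) ≤ 100 * Qfac 1 u t :=
  sqrt_le_iff.2 ⟨mul_nonneg (by norm_num) (Qfac_nonneg 1 u t),
    (integral_jb_sub_rad_mul_d2abs_sq_le hu hc ht).trans_eq (by ring)⟩

end HessianEstimate

theorem stmt_17_general :
    ∃ C : ℝ, 0 < C ∧
      ∀ (u v : Pt → ℝ), ContDiff ℝ 3 u → HasCompactSupport u →
        ContDiff ℝ 1 v → HasCompactSupport v →
        ∀ t : ℝ, 0 ≤ t →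
          ∫ x : Sp, (jb (t - rad x) / jb (t + rad x)) *
              d2abs u (Fin.cons t x) * gradNorm v (Fin.cons t x) * (jb (rad x))⁻¹
            ≤ C * (jb t)⁻¹ * Qfac 1 u t *
                (∫ x : Sp, (∑ a, (pd a v (Fin.cons t x)) ^ 2) / jb (rad x) ^ 2) ^ ((1:ℝ)/2) := by
  refine ⟨100, by norm_num, fun u v hu hcu hv hcv t ht => ?_⟩
  set F : Sp → ℝ := fun x => jb (t - rad x) * d2abs u (Fin.cons t x)
  set G : Sp → ℝ := fun x => gradNorm v (Fin.cons t x) / jb (rad x)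
  have hF : MemLp F 2 := memLp_jb_sub_rad_mul_d2abs (hu.of_le (by norm_num)) hcu t
  have hG : MemLp G 2 := memLp_gradNorm_div_jb_rad hv hcv t
  have hd := d2abs_nonneg u
  have hg := gradNorm_nonneg v
  have hF0 : 0 ≤ F := fun x => mul_nonneg (jb_pos _).le (hd _)
  have hG0 : 0 ≤ G := fun x => div_nonneg (hg _) (jb_pos _).le
  have hjb : 0 ≤ (jb t)⁻¹ := inv_nonneg.2 (jb_pos t).le
  simp_rw [← sqrt_eq_rpow, ← gradNorm_div_jb_sq]
  calc _ ≤ ∫ x, (jb t)⁻¹ * (F x * G x) :=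
        integral_mono_of_nonneg (ae_of_all _ fun x => jb_sub_rad_div_mul_nonneg t x (hd _) (hg _))
          ((hF.integrable_mul hG).const_mul _)
          (ae_of_all _ fun x => jb_sub_rad_div_mul_le ht x (hd _) (hg _))
    _ = (jb t)⁻¹ * ∫ x, F x * G x := integral_const_mul _ _
    _ ≤ (jb t)⁻¹ * (√(∫ x, F x ^ 2) * √(∫ x, G x ^ 2)) := by
        gcongr
        exact integral_mul_le_sqrt_mul_sqrt hF hG hF0 hG0
    _ ≤ (jb t)⁻¹ * (100 * Qfac 1 u t * √(∫ x, G x ^ 2)) := by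
        gcongr
        exact sqrt_integral_jb_sub_rad_mul_d2abs_sq_le hu hcu ht
    _ = 100 * (jb t)⁻¹ * Qfac 1 u t * √(∫ x, G x ^ 2) := by ring

/-- inequality (3.9) of the paper, Corollary 3.4. -/
theorem stmt_17 :
    ∃ C : ℝ, 0 < C ∧
      ∀ (u v : Pt → ℝ), ContDiff ℝ (⊤ : ℕ∞) u → HasCompactSupport u →
        ContDiff ℝ (⊤ : ℕ∞) v → HasCompactSupport v →
        ∀ t : ℝ, 0 ≤ t →
          ∫ x : Sp, (jb (t - rad x) / jb (t + rad x)) *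
              d2abs u (Fin.cons t x) * gradNorm v (Fin.cons t x) * (jb (rad x))⁻¹
            ≤ C * (jb t)⁻¹ * Qfac 1 u t *
                (∫ x : Sp, (∑ a, (pd a v (Fin.cons t x)) ^ 2) / jb (rad x) ^ 2) ^ ((1:ℝ)/2) := by
  obtain ⟨C, hC, hbound⟩ := stmt_17_general
  exact ⟨C, hC, fun u v hu hcu hv hcv =>
    hbound u v (mod_cast contDiff_infty.1 hu 3) hcu (mod_cast contDiff_infty.1 hv 1) hcv⟩
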